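/- arXiv:2303.14507 — 6 statements merged into one kernel-verified Lean document; each statement's English description precedes it below -/
import Mathlib

section
/- Let M be an admissible weight sequence and set Λ_k = M_k^{1/k} for k ≥ 1. Then there exists a constant σ > 1 such that the following holds: for each integer k ≥ 1 there is a sequence (k_j)_{j≥0} of positive integers with Λ_{k_0} ≤ Λ_k and σ^{j−1} Λ_k ≤ Λ_{k_j} ≤ σ^j Λ_k for all j ≥ 1. -/
open MeasureTheory Filter Finset

noncomputable section

/-- `M` is a weight sequence: positivity, `M₀ = 1`, `M₁ ≥ 1`, log-convexity, and
`M_k^{1/k} → ∞`. -/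
def IsWeightSeq (M : ℕ → ℝ) : Prop :=
  (∀ k, 0 < M k) ∧ M 0 = 1 ∧ 1 ≤ M 1 ∧
    (∀ k : ℕ, (M (k + 1)) ^ 2 ≤ M k * M (k + 2)) ∧
    Tendsto (fun k : ℕ => (M k) ^ ((k : ℝ)⁻¹)) atTop atTop

/-- `Λ_k = M_k^{1/k}`. -/
def Lam (M : ℕ → ℝ) (k : ℕ) : ℝ := (M k) ^ ((k : ℝ)⁻¹)

/-- Condition (i): there are `C, h > 0` with `k! ≤ C h^k M_k` for all `k`. -/
def FactBound (M : ℕ → ℝ) : Prop :=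
  ∃ C > 0, ∃ h > 0, ∀ k : ℕ, (k.factorial : ℝ) ≤ C * h ^ k * M k

/-- Condition (mg): there is `A > 0` with `M_{j+k} ≤ A^{j+k} M_j M_k` for all `j, k`. -/
def MG (M : ℕ → ℝ) : Prop := ∃ A > 0, ∀ j k : ℕ, M (j + k) ≤ A ^ (j + k) * M j * M k

/-- Admissible weight sequence. -/
def IsAdmissible (M : ℕ → ℝ) : Prop := IsWeightSeq M ∧ FactBound M ∧ MG M

theorem wseq_mono (M : ℕ → ℝ) (h : IsWeightSeq M) (n : ℕ) : 1 ≤ M n ∧ M n ≤ M (n + 1) := by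
  obtain ⟨hpos, h0, h1, hlc, -⟩ := h
  induction n with
  | zero => exact ⟨h0.ge, by simpa [h0] using h1⟩
  | succ n ih =>
    refine ⟨ih.1.trans ih.2, ?_⟩
    have h2 := hlc n
    have hp := hpos n
    have hq := hpos (n + 1)
    have hr := hpos (n + 2)
    show M (n + 1) ≤ M (n + 2)
    by_contra hc
    push Not at hc
    nlinarith [mul_lt_mul_of_pos_left hc hq, mul_le_mul_of_nonneg_right ih.2 hr.le]

theorem lam_step (M : ℕ → ℝ) (h : IsWeightSeq M) (A : ℝ) (hA : 0 < A)
    (hmg : ∀ j k : ℕ, M (j + k) ≤ A ^ (j + k) * M j * M k) (n : ℕ) (hn : 1 ≤ n) :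
    Lam M (n + 1) ≤ (A * M 1) * Lam M n := by
  have hm := fun n => (wseq_mono M h n).1
  have hp := h.1
  have hn0 : (0 : ℝ) < n := by exact_mod_cast hn
  have hi0 : (0 : ℝ) ≤ ((n + 1 : ℕ) : ℝ)⁻¹ := by positivity
  have hi1 : ((n + 1 : ℕ) : ℝ)⁻¹ ≤ 1 := by
    apply inv_le_one_of_one_le₀
    push_cast
    linarith
  have hi2 : ((n + 1 : ℕ) : ℝ)⁻¹ ≤ (n : ℝ)⁻¹ := by
    apply inv_anti₀ hn0
    push_cast
    linarith
  unfold Lam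
  have e1 : M (n + 1) ≤ A ^ (n + 1) * (M n * M 1) := by
    have := hmg n 1
    rwa [mul_assoc] at this
  calc M (n + 1) ^ ((n + 1 : ℕ) : ℝ)⁻¹
      ≤ (A ^ (n + 1) * (M n * M 1)) ^ ((n + 1 : ℕ) : ℝ)⁻¹ :=
        Real.rpow_le_rpow (hp _).le e1 hi0
    _ = A * (M n ^ ((n + 1 : ℕ) : ℝ)⁻¹ * M 1 ^ ((n + 1 : ℕ) : ℝ)⁻¹) := by
        rw [Real.mul_rpow (by positivity) (mul_pos (hp _) (hp _)).le,
          Real.mul_rpow (hp _).le (hp _).le, Real.pow_rpow_inv_natCast hA.le (by omega)]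
    _ ≤ A * (M n ^ (n : ℝ)⁻¹ * M 1) := by
        have a1 := Real.rpow_le_rpow_of_exponent_le (hm n) hi2
        have a2 := Real.rpow_le_rpow_of_exponent_le (hm 1) hi1
        rw [Real.rpow_one] at a2
        have b1 := Real.rpow_nonneg (hp n).le (n : ℝ)⁻¹
        have b2 := Real.rpow_nonneg (hp 1).le ((n + 1 : ℕ) : ℝ)⁻¹
        exact mul_le_mul_of_nonneg_left (mul_le_mul a1 a2 b2 b1) hA.le
    _ = (A * M 1) * M n ^ (n : ℝ)⁻¹ := by ring

/-- Lemma 1 of the paper: if `M` is an admissible weight sequence then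
there is `σ > 1` such that for each `k ≥ 1` there is a sequence `(k_j)` of positive integers
with `Λ_{k_0} ≤ Λ_k` and `σ^{j-1} Λ_k ≤ Λ_{k_j} ≤ σ^j Λ_k` for all `j ≥ 1`. -/
theorem statement0 (M : ℕ → ℝ) (hM : IsAdmissible M) :
    ∃ σ : ℝ, 1 < σ ∧ ∀ k : ℕ, 1 ≤ k → ∃ kj : ℕ → ℕ,
      (∀ j, 1 ≤ kj j) ∧ Lam M (kj 0) ≤ Lam M k ∧
      ∀ j : ℕ, 1 ≤ j →
        σ ^ (j - 1) * Lam M k ≤ Lam M (kj j) ∧ Lam M (kj j) ≤ σ ^ j * Lam M k := by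
  obtain ⟨hW, -, A, hA, hmg⟩ := hM
  have hpA : 0 < A * M 1 := mul_pos hA (hW.1 1)
  have hL : ∀ n, 0 < Lam M n := fun n => Real.rpow_pos_of_pos (hW.1 n) _
  refine ⟨A * M 1 + 1, by linarith, fun k hk => ?_⟩
  set σ := A * M 1 + 1 with hσ
  have hσ1 : 1 ≤ σ := by linarith
  have key : ∀ j : ℕ, ∃ n : ℕ, 1 ≤ n ∧
      σ ^ j * Lam M k ≤ Lam M n ∧ Lam M n ≤ σ ^ (j + 1) * Lam M k := by
    intro j
    have hex : ∃ n, k ≤ n ∧ σ ^ j * Lam M k ≤ Lam M n :=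
      ((eventually_ge_atTop k).and
        (hW.2.2.2.2.eventually_ge_atTop (σ ^ j * Lam M k))).exists
    classical
    obtain ⟨h1, h2⟩ := Nat.find_spec hex
    have hmin := fun m => @Nat.find_min _ _ hex m
    generalize Nat.find hex = n at h1 h2 hmin
    refine ⟨n, hk.trans h1, h2, ?_⟩
    rcases h1.eq_or_lt with rfl | hlt
    · exact le_mul_of_one_le_left (hL _).le (one_le_pow₀ hσ1)
    · obtain ⟨m, rfl⟩ : ∃ m, n = m + 1 := ⟨n - 1, by omega⟩
      have h3 := hmin m (by omega)
      have h4 : Lam M m < σ ^ j * Lam M k := by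
        by_contra hc
        exact h3 ⟨by omega, not_lt.mp hc⟩
      have h5 := lam_step M hW A hA hmg m (by omega)
      have h6 : (A * M 1) * Lam M m ≤ σ * Lam M m :=
        mul_le_mul_of_nonneg_right (by linarith) (hL m).le
      have h7 : σ * Lam M m ≤ σ * (σ ^ j * Lam M k) :=
        mul_le_mul_of_nonneg_left h4.le (by linarith)
      rw [pow_succ']
      linarith
  choose f hf using key
  refine ⟨fun j => if j = 0 then k else f (j - 1), fun j => ?_, by simp, fun j hj => ?_⟩
  · by_cases h : j = 0
    · simpa [h] using hk
    · simpa [h] using (hf (j - 1)).1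
  · obtain ⟨i, rfl⟩ : ∃ i, j = i + 1 := ⟨j - 1, by omega⟩
    simpa using (hf i).2


end
end

section
/- Let M be an admissible weight sequence and set Λ_k = M_k^{1/k} for k ≥ 1. Then there exists a constant H ≥ 1 such that ω_M(Λ_k) ≤ H k for all k ≥ 1, where ω_M is the weight function associated to M. -/
open MeasureTheory Filter Finset

noncomputable section

/-- The weight function `ω_M` associated to `M`. -/
def omegaM (M : ℕ → ℝ) (t : ℝ) : ℝ := ⨆ k : ℕ, Real.log (t ^ k / M k)

theorem aux_mono (L : ℕ → ℝ) (h0 : L 0 = 0)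
    (hc : ∀ k, 2 * L (k + 1) ≤ L k + L (k + 2)) (i k : ℕ) (hik : i ≤ k) :
    (k : ℝ) * L i ≤ i * L k := by
  have h1 : ∀ n : ℕ, ((n : ℝ) + 1) * L n ≤ n * L (n + 1) := by
    intro n
    induction n with
    | zero => simp [h0]
    | succ n ih =>
      push_cast
      have := hc n
      have hn : (0 : ℝ) ≤ n := n.cast_nonneg
      nlinarith [mul_le_mul_of_nonneg_left this (by positivity : (0 : ℝ) ≤ (n : ℝ) + 1)]
  induction k, hik using Nat.le_induction with
  | base => exact le_rfl
  | succ k hik ih =>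
    rcases Nat.eq_zero_or_pos k with hk | hk
    · have : i = 0 := by omega
      subst this
      simp [h0]
    · have hk' : (0 : ℝ) < k := by exact_mod_cast hk
      have hi : (0 : ℝ) ≤ i := i.cast_nonneg
      push_cast
      refine le_of_mul_le_mul_left ?_ hk'
      nlinarith [mul_le_mul_of_nonneg_left ih (by positivity : (0 : ℝ) ≤ (k : ℝ) + 1),
        mul_le_mul_of_nonneg_left (h1 k) hi]

/-- Lemma 2 of the paper: if `M` is an admissible weight sequence then there
is `H ≥ 1` with `ω_M(Λ_k) ≤ H k` for all `k ≥ 1`. -/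
theorem statement1 (M : ℕ → ℝ) (hM : IsAdmissible M) :
    ∃ H : ℝ, 1 ≤ H ∧ ∀ k : ℕ, 1 ≤ k → omegaM M (Lam M k) ≤ H * k := by
  obtain ⟨⟨hpos, h0, -, hlc, -⟩, -, A, hA, hmg⟩ := hM
  have hmono := aux_mono (fun k => Real.log (M k)) (by simp [h0]) (by
    intro k
    have h := Real.log_le_log (pow_pos (hpos (k + 1)) 2) (hlc k)
    rw [Real.log_mul (hpos _).ne' (hpos _).ne', Real.log_pow] at h
    exact_mod_cast h)
  refine ⟨max 1 (Real.log A), le_max_left _ _, fun k hk => ?_⟩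
  have hk' : (0 : ℝ) < k := by exact_mod_cast hk
  refine ciSup_le fun j => ?_
  have hL : 0 < Lam M k := Real.rpow_pos_of_pos (hpos k) _
  rw [Real.log_div (pow_pos hL j).ne' (hpos j).ne', Real.log_pow, Lam, Real.log_rpow (hpos k)]
  have hH1 : 1 ≤ max 1 (Real.log A) := le_max_left _ _
  have hH2 : Real.log A ≤ max 1 (Real.log A) := le_max_right _ _
  generalize max 1 (Real.log A) = H at hH1 hH2
  refine le_of_mul_le_mul_left ?_ hk'
  have e : (k : ℝ) * (j * ((k : ℝ)⁻¹ * Real.log (M k)) - Real.log (M j))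
      = j * Real.log (M k) - k * Real.log (M j) := by
    field_simp
  rw [e]
  rcases le_total k j with hj | hj
  · have h := hmono k j hj
    by_cases hc : Real.log (M k) * j ≤ k * Real.log (M j)
    · have : 0 ≤ (k : ℝ) * (H * k) := by positivity
      linarith
    · exact absurd (by linarith) hc
  · obtain ⟨i, rfl⟩ := Nat.exists_eq_add_of_le hj
    have h := hmono i (j + i) (by omega)
    have h2 := Real.log_le_log (hpos _) (hmg j i)
    rw [Real.log_mul (mul_pos (pow_pos hA _) (hpos _)).ne' (hpos _).ne',
      Real.log_mul (pow_pos hA _).ne' (hpos _).ne', Real.log_pow] at h2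
    push_cast at *
    nlinarith [mul_le_mul_of_nonneg_left h2 hk'.le,
      mul_le_mul_of_nonneg_left hH2 (mul_pos hk' hk').le]

end
end

section
/- For every s ≥ 1 and σ ≥ 0, the sequence N^{s,σ} defined by N_k^{s,σ} = (k!)^s (log(k+e))^{σk} is an admissible weight sequence: it satisfies N_0 = 1, N_1 ≥ 1, log-convexity N_k^2 ≤ N_{k−1} N_{k+1} for k ≥ 1, N_k^{1/k} → ∞, there exist C, h > 0 with k! ≤ C h^k N_k for all k, and there exists A > 0 with N_{j+k} ≤ A^{j+k} N_j N_k for all j, k ≥ 0. -/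
open MeasureTheory Filter Finset

noncomputable section

/-- The sequence `N^{s,σ}` with `N_k = (k!)^s (log(k+e))^{σ k}`. -/
def Nseq (s σ : ℝ) (k : ℕ) : ℝ :=
  (k.factorial : ℝ) ^ s * (Real.log ((k : ℝ) + Real.exp 1)) ^ (σ * (k : ℝ))

def gg (x : ℝ) : ℝ := Real.log (Real.log (x + Real.exp 1))

lemma one_le_l {x : ℝ} (hx : 0 ≤ x) : 1 ≤ Real.log (x + Real.exp 1) := by
  rw [Real.le_log_iff_exp_le (by positivity)]
  linarith

lemma gg_nonneg {x : ℝ} (hx : 0 ≤ x) : 0 ≤ gg x := Real.log_nonneg (one_le_l hx)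

lemma Nseq_eq (s σ : ℝ) (k : ℕ) :
    Nseq s σ k = Real.exp (s * Real.log (k.factorial : ℝ) + σ * (k * gg k)) := by
  have h1 : (0:ℝ) < k.factorial := by exact_mod_cast k.factorial_pos
  have h2 := one_le_l (Nat.cast_nonneg (α := ℝ) k)
  unfold Nseq gg
  rw [Real.exp_add, Real.rpow_def_of_pos h1, Real.rpow_def_of_pos (by linarith)]
  congr 2 <;> ring

lemma gg_deriv {x : ℝ} (hx : 0 ≤ x) :
    HasDerivAt gg (1 / (x + Real.exp 1) / Real.log (x + Real.exp 1)) x := by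
  have h2 := one_le_l hx
  have he := Real.exp_pos 1
  exact (((hasDerivAt_id x).add_const (Real.exp 1)).log (by simp only [id]; positivity)).log
    (by simp only [id]; linarith)

lemma conv : ConvexOn ℝ (Set.Ici 0) (fun x => x * gg x) := by
  have he := Real.exp_pos 1
  apply convexOn_of_hasDerivWithinAt2_nonneg (convex_Ici 0)
    (f' := fun x => gg x + x * (1 / (x + Real.exp 1) / Real.log (x + Real.exp 1)))
    (f'' := fun x => (1 / (x + Real.exp 1) / Real.log (x + Real.exp 1)) +
      (1 * (1 / (x + Real.exp 1) / Real.log (x + Real.exp 1)) +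
       x * ((((-1) / (x + Real.exp 1)^2) * Real.log (x + Real.exp 1) -
        1 / (x + Real.exp 1) * (1 / (x + Real.exp 1))) / Real.log (x + Real.exp 1) ^ 2)))
  · intro x hx
    exact ((continuousAt_id).mul (gg_deriv hx).continuousAt).continuousWithinAt
  · intro x hx
    rw [interior_Ici] at hx
    have hx : 0 < x := hx
    have := (hasDerivAt_id x).mul (gg_deriv hx.le)
    simp only [id, one_mul] at this
    exact this.hasDerivWithinAt
  · intro x hx
    rw [interior_Ici] at hx
    have hx : 0 < x := hx
    have h2 := one_le_l hx.le
    have h0 : x + Real.exp 1 ≠ 0 := by positivity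
    have a1 : HasDerivAt (fun y : ℝ => y + Real.exp 1) 1 x := (hasDerivAt_id x).add_const _
    have a2 : HasDerivAt (fun y : ℝ => 1 / (y + Real.exp 1)) (-1 / (x + Real.exp 1)^2) x := by
      simp only [one_div]
      exact a1.inv h0
    exact ((gg_deriv hx.le).add ((hasDerivAt_id x).mul
      (a2.div (a1.log h0) (by linarith)))).hasDerivWithinAt
  · intro x hx
    rw [interior_Ici] at hx
    have hx : 0 < x := hx
    have h2 := one_le_l hx.le
    have h0 : 0 < x + Real.exp 1 := by positivity
    generalize Real.log (x + Real.exp 1) = L at *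
    have hL : 0 < L := by linarith
    have : (1 / (x + Real.exp 1) / L) + (1 * (1 / (x + Real.exp 1) / L) +
       x * ((((-1) / (x + Real.exp 1)^2) * L -
        1 / (x + Real.exp 1) * (1 / (x + Real.exp 1))) / L ^ 2)) =
       (2 * (x + Real.exp 1) * L - x * L - x) / ((x + Real.exp 1)^2 * L^2) := by
      field_simp
      ring
    rw [this]
    apply div_nonneg _ (by positivity)
    nlinarith [mul_pos he hL]

lemma mgl {j k : ℝ} (hj : 0 ≤ j) (hk : 0 ≤ k) : j * gg (j + k) ≤ j * gg j + k := by
  have he := Real.exp_pos 1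
  have h1 := one_le_l hj
  have h2 := one_le_l (add_nonneg hj hk)
  have a : gg (j + k) - gg j ≤ k / (j + Real.exp 1) := by
    unfold gg
    rw [← Real.log_div (by linarith) (by linarith)]
    have b := Real.log_le_sub_one_of_pos (x := Real.log (j + k + Real.exp 1) /
      Real.log (j + Real.exp 1)) (div_pos (by linarith) (by linarith))
    have c := Real.log_le_sub_one_of_pos (x := (j + k + Real.exp 1) /
      (j + Real.exp 1)) (by positivity)
    rw [Real.log_div (by positivity) (by positivity)] at c
    have d : (j + k + Real.exp 1) / (j + Real.exp 1) - 1 = k / (j + Real.exp 1) := by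
      field_simp
      ring
    have hm : Real.log (j + Real.exp 1) ≤ Real.log (j + k + Real.exp 1) :=
      Real.log_le_log (by positivity) (by linarith)
    have e : Real.log (j + k + Real.exp 1) / Real.log (j + Real.exp 1) - 1 ≤
        Real.log (j + k + Real.exp 1) - Real.log (j + Real.exp 1) := by
      rw [sub_le_iff_le_add, div_le_iff₀ (by linarith)]
      nlinarith
    linarith
  have f : j * (k / (j + Real.exp 1)) ≤ k := by
    rw [← mul_div_assoc, div_le_iff₀ (by positivity)]
    nlinarith
  nlinarith [mul_le_mul_of_nonneg_left a hj]

lemma fact_le (s σ : ℝ) (hs : 1 ≤ s) (hσ : 0 ≤ σ) (k : ℕ) :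
    (k.factorial : ℝ) ≤ Nseq s σ k := by
  have h1 : (1:ℝ) ≤ k.factorial := by exact_mod_cast k.factorial_pos
  rw [Nseq_eq, ← Real.log_le_iff_le_exp (by linarith)]
  have := Real.log_nonneg h1
  have h3 := gg_nonneg (Nat.cast_nonneg (α := ℝ) k)
  have : 0 ≤ σ * (k * gg k) := by positivity
  nlinarith

/-- for each `s ≥ 1` and `σ ≥ 0` the sequence `N^{s,σ}` is an admissible
weight sequence. -/
theorem statement6 (s σ : ℝ) (hs : 1 ≤ s) (hσ : 0 ≤ σ) :
    Nseq s σ 0 = 1 ∧ 1 ≤ Nseq s σ 1 ∧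
      (∀ k : ℕ, (Nseq s σ (k + 1)) ^ 2 ≤ Nseq s σ k * Nseq s σ (k + 2)) ∧
      Tendsto (fun k : ℕ => (Nseq s σ k) ^ ((k : ℝ)⁻¹)) atTop atTop ∧
      FactBound (Nseq s σ) ∧ MG (Nseq s σ) := by
  have e0 : Nseq s σ 0 = 1 := by simp [Nseq]
  refine ⟨e0, ?_, ?_, ?_, ?_, ?_⟩
  · simpa using fact_le s σ hs hσ 1
  · intro k
    simp only [Nseq_eq]
    rw [← Real.exp_add, ← Real.exp_nat_mul, Real.exp_le_exp]
    have hc := conv.2 (show (k:ℝ) ∈ Set.Ici 0 by simp)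
      (show (k:ℝ) + 2 ∈ Set.Ici 0 by rw [Set.mem_Ici]; positivity)
      (show (0:ℝ) ≤ 1/2 by norm_num) (show (0:ℝ) ≤ 1/2 by norm_num) (by norm_num)
    simp only [smul_eq_mul] at hc
    have e : (1/2 * (k:ℝ) + 1/2 * ((k:ℝ)+2)) = k + 1 := by ring
    rw [e] at hc
    have p0 : (0:ℝ) < k.factorial := by exact_mod_cast k.factorial_pos
    have q1 : Real.log ((k+1).factorial : ℝ) = Real.log (k+1) + Real.log k.factorial := by
      rw [Nat.factorial_succ]; push_cast
      rw [Real.log_mul (by positivity) (by positivity)]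
    have q2 : Real.log ((k+2).factorial : ℝ) =
        Real.log (k+2) + (Real.log (k+1) + Real.log k.factorial) := by
      rw [← q1, Nat.factorial_succ (k+1)]; push_cast
      rw [Real.log_mul (by positivity) (by positivity)]
      ring_nf
    have q3 : Real.log ((k:ℝ)+1) ≤ Real.log ((k:ℝ)+2) :=
      Real.log_le_log (by positivity) (by linarith)
    rw [q1, q2]
    push_cast
    nlinarith [mul_le_mul_of_nonneg_left hc hσ,
      mul_le_mul_of_nonneg_left q3 (by linarith : 0 ≤ s)]
  · have ht : Tendsto (fun k : ℕ => (k:ℝ) / Real.exp 1) atTop atTop :=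
      tendsto_natCast_atTop_atTop.atTop_div_const (Real.exp_pos 1)
    refine tendsto_atTop_mono' _ ?_ ht
    filter_upwards [eventually_gt_atTop 0] with k hk
    have p0 : (0:ℝ) < k.factorial := by exact_mod_cast k.factorial_pos
    have h := Real.pow_div_factorial_le_exp (k:ℝ) (by positivity) k
    have h' : ((k:ℝ) / Real.exp 1) ^ k ≤ Nseq s σ k := by
      refine le_trans ?_ (fact_le s σ hs hσ k)
      rw [div_pow, ← Real.exp_nat_mul, mul_one, div_le_iff₀ (Real.exp_pos _)]
      rw [div_le_iff₀ p0] at h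
      linarith
    calc (k:ℝ) / Real.exp 1 = (((k:ℝ) / Real.exp 1) ^ k) ^ ((k:ℝ)⁻¹) := by
          rw [Real.pow_rpow_inv_natCast (by positivity) (by omega)]
      _ ≤ _ := Real.rpow_le_rpow (by positivity) h' (by positivity)
  · exact ⟨1, one_pos, 1, one_pos, fun k => by simpa using fact_le s σ hs hσ k⟩
  · refine ⟨Real.exp (s * Real.log 2 + σ), Real.exp_pos _, fun j k => ?_⟩
    simp only [Nseq_eq]
    rw [← Real.exp_nat_mul, ← Real.exp_add, ← Real.exp_add, Real.exp_le_exp]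
    have a := mgl (Nat.cast_nonneg (α := ℝ) j) (Nat.cast_nonneg (α := ℝ) k)
    have b := mgl (Nat.cast_nonneg (α := ℝ) k) (Nat.cast_nonneg (α := ℝ) j)
    rw [add_comm (k:ℝ) j] at b
    have pj : (0:ℝ) < j.factorial := by exact_mod_cast j.factorial_pos
    have pk : (0:ℝ) < k.factorial := by exact_mod_cast k.factorial_pos
    have pn : (0:ℝ) < (j+k).factorial := by exact_mod_cast (j+k).factorial_pos
    have c : ((j+k).factorial : ℝ) ≤ 2^(j+k) * j.factorial * k.factorial := by
      have h1 := Nat.add_choose_mul_factorial_mul_factorial j k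
      have h2 := Nat.choose_le_two_pow (j+k) k
      rw [← h1]
      push_cast
      gcongr
      exact_mod_cast h2
    have d := Real.log_le_log pn c
    rw [Real.log_mul (by positivity) (by positivity), Real.log_mul (by positivity) (by positivity),
      Real.log_pow] at d
    push_cast at d ⊢
    nlinarith [mul_le_mul_of_nonneg_left (add_le_add a b) hσ,
      mul_le_mul_of_nonneg_left d (by linarith : 0 ≤ s)]

end
end

section
/- Fix s ≥ 1. For every σ > 0 and every s' > s one has G^s ⪵ N^{s,σ} ⪵ G^{s'}; that is: G^s ⪯ N^{s,σ} but N^{s,σ} is not ⪯ G^s, and N^{s,σ} ⪯ G^{s'} but G^{s'} is not ⪯ N^{s,σ}. -/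
open MeasureTheory Filter Finset

noncomputable section

/-- The relation `M ⪯ N`. -/
def Preceq (M N : ℕ → ℝ) : Prop := ∃ C > 0, ∃ h > 0, ∀ k : ℕ, M k ≤ C * h ^ k * N k

/-- The Gevrey sequence `G^s_k = (k!)^s`. -/
def Gev (s : ℝ) (k : ℕ) : ℝ := (k.factorial : ℝ) ^ s

theorem aux_unbdd (a : ℕ → ℝ) (ha : Tendsto a atTop atTop) (C h : ℝ) (hh : 0 < h)
    (H : ∀ k, a k ^ k ≤ C * h ^ k) : False := by
  have h2 : Tendsto (fun k : ℕ => (2 : ℝ) ^ k) atTop atTop :=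
    tendsto_pow_atTop_atTop_of_one_lt (by norm_num)
  obtain ⟨k, hk1, hk2⟩ := ((ha.eventually_ge_atTop (2 * h)).and (h2.eventually_gt_atTop C)).exists
  have h3 : (2 * h) ^ k ≤ a k ^ k := pow_le_pow_left₀ (by positivity) hk1 k
  rw [mul_pow] at h3
  have h4 : 0 < h ^ k := by positivity
  have := le_of_mul_le_mul_right (h3.trans (H k)) h4
  linarith

theorem aux_log_ge (k : ℕ) : 1 ≤ Real.log ((k : ℝ) + Real.exp 1) := by
  rw [Real.le_log_iff_exp_le (by positivity)]
  have : (0 : ℝ) ≤ k := by positivity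
  linarith

theorem aux_fact (k : ℕ) : ((k : ℝ) / Real.exp 1) ^ k ≤ (k.factorial : ℝ) := by
  have h := Real.pow_div_factorial_le_exp (k : ℝ) (by positivity) k
  rw [div_le_iff₀ (by positivity)] at h
  rw [div_pow, ← Real.exp_nat_mul, mul_one, div_le_iff₀ (by positivity)]
  linarith

theorem aux_gev (d : ℝ) (hd : 0 < d) (k : ℕ) :
    (((k : ℝ) / Real.exp 1) ^ d) ^ k ≤ (k.factorial : ℝ) ^ d := by
  rw [← Real.rpow_natCast, ← Real.rpow_mul (by positivity), mul_comm,
    Real.rpow_mul (by positivity), Real.rpow_natCast]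
  exact Real.rpow_le_rpow (by positivity) (aux_fact k) hd.le

theorem aux_upper (s σ s' : ℝ) (hσ : 0 < σ) (hs' : s < s') :
    Preceq (Nseq s σ) (Gev s') := by
  obtain ⟨d, rfl⟩ : ∃ d, s' = s + d := ⟨s' - s, by ring⟩
  have hd : 0 < d := by linarith
  set ε := d / σ with hε
  have hε0 : 0 < ε := by positivity
  set B : ℝ := (((1 + Real.exp 1) * Real.exp 1) ^ d) / ε ^ σ with hB
  have hB0 : 0 < B := by positivity
  refine ⟨1, one_pos, B, hB0, fun k => ?_⟩
  have hf : (0 : ℝ) < (k.factorial : ℝ) := by positivity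
  unfold Nseq Gev
  rw [Real.rpow_add hf, one_mul, mul_left_comm]
  refine mul_le_mul_of_nonneg_left ?_ (by positivity)
  rcases Nat.eq_zero_or_pos k with rfl | hk
  · simp
  have hk1 : (1 : ℝ) ≤ k := by exact_mod_cast hk
  have hL := aux_log_ge k
  have key : (Real.log ((k : ℝ) + Real.exp 1)) ^ σ ≤ B * ((k : ℝ) / Real.exp 1) ^ d := by
    have h1 : Real.log ((k : ℝ) + Real.exp 1) ≤ ((k : ℝ) + Real.exp 1) ^ ε / ε :=
      Real.log_le_rpow_div (by positivity) hε0
    have h2 := Real.rpow_le_rpow (by linarith) h1 hσ.le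
    rw [Real.div_rpow (by positivity) hε0.le, ← Real.rpow_mul (by positivity),
      show ε * σ = d by rw [hε]; field_simp] at h2
    refine h2.trans ?_
    rw [hB, div_mul_eq_mul_div, ← Real.mul_rpow (by positivity) (by positivity)]
    refine div_le_div_of_nonneg_right ?_ (by positivity)
    refine Real.rpow_le_rpow (by positivity) ?_ hd.le
    have he := Real.exp_pos 1
    have : (1 + Real.exp 1) * Real.exp 1 * (k / Real.exp 1) = (1 + Real.exp 1) * k := by
      field_simp
    rw [this]
    nlinarith
  rw [Real.rpow_mul (by linarith), Real.rpow_natCast]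
  calc _ ≤ (B * ((k : ℝ) / Real.exp 1) ^ d) ^ k := pow_le_pow_left₀ (by positivity) key k
    _ = B ^ k * (((k : ℝ) / Real.exp 1) ^ d) ^ k := mul_pow _ _ _
    _ ≤ _ := mul_le_mul_of_nonneg_left (aux_gev d hd k) (by positivity)

theorem aux_gev_strict (s d : ℝ) (hd : 0 < d) : ¬ Preceq (Gev (s + d)) (Gev s) := by
  rintro ⟨C, hC, h, hh, H⟩
  refine aux_unbdd (fun k => ((k : ℝ) / Real.exp 1) ^ d) ?_ C h hh fun k => ?_
  · exact (tendsto_rpow_atTop hd).comp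
      (tendsto_natCast_atTop_atTop.atTop_div_const (Real.exp_pos 1))
  · refine (aux_gev d hd k).trans ?_
    have hf : (0 : ℝ) < (k.factorial : ℝ) := by positivity
    have := H k
    unfold Gev at this
    rw [Real.rpow_add hf, mul_comm] at this
    exact le_of_mul_le_mul_right this (by positivity)

theorem aux_trans {M N P : ℕ → ℝ} (h1 : Preceq M N) (h2 : Preceq N P) : Preceq M P := by
  obtain ⟨C, hC, h, hh, H⟩ := h1
  obtain ⟨D, hD, g, hg, K⟩ := h2
  refine ⟨C * D, by positivity, h * g, by positivity, fun k => (H k).trans ?_⟩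
  calc C * h ^ k * N k ≤ C * h ^ k * (D * g ^ k * P k) :=
        mul_le_mul_of_nonneg_left (K k) (by positivity)
    _ = _ := by rw [mul_pow]; ring

/-- for fixed `s ≥ 1`, every `σ > 0` and `s' > s` one has
`G^s ⪵ N^{s,σ} ⪵ G^{s'}`. -/
theorem statement7 (s σ s' : ℝ) (hs : 1 ≤ s) (hσ : 0 < σ) (hs' : s < s') :
    Preceq (Gev s) (Nseq s σ) ∧ ¬ Preceq (Nseq s σ) (Gev s) ∧
      Preceq (Nseq s σ) (Gev s') ∧ ¬ Preceq (Gev s') (Nseq s σ) := by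
  refine ⟨⟨1, one_pos, 1, one_pos, fun k => ?_⟩, ?_, aux_upper s σ s' hσ hs', fun H => ?_⟩
  · unfold Gev Nseq
    rw [one_pow, one_mul, one_mul]
    exact le_mul_of_one_le_right (by positivity)
      (Real.one_le_rpow (aux_log_ge k) (by positivity))
  · rintro ⟨C, hC, h, hh, H⟩
    refine aux_unbdd (fun k => (Real.log ((k : ℝ) + Real.exp 1)) ^ σ) ?_ C h hh fun k => ?_
    · exact (tendsto_rpow_atTop hσ).comp (Real.tendsto_log_atTop.comp
        (tendsto_atTop_add_const_right _ _ tendsto_natCast_atTop_atTop))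
    · have := H k
      have hL := aux_log_ge k
      unfold Gev Nseq at this
      rw [Real.rpow_mul (by linarith), Real.rpow_natCast, mul_comm] at this
      exact le_of_mul_le_mul_right this (by positivity)
  · have h1 := aux_trans H (aux_upper s σ ((s + s') / 2) hσ (by linarith))
    refine aux_gev_strict ((s + s') / 2) ((s' - s) / 2) (by linarith) ?_
    rwa [show (s + s') / 2 + (s' - s) / 2 = s' by ring]

end
end

section
/- Let U ⊆ ℝ^n be open, V ⋐ U open, and (χ_k)_{k≥1} an Ehrenpreis–Hörmander cut-off sequence supported in U (with constant Q). Let M be a weight sequence satisfying: there exist C, h > 0 with k! ≤ C h^k M_k for all k. Then there is a constant γ > 0 such that for all k ≥ 1 and all u ∈ C^∞(U) with ∂^α u ∈ L²(U) for all |α| ≤ k, the function χ_k u (extended by 0 outside U) satisfies |||χ_k u|||_{ℝ^n,M,k} ≤ γ^k |||u|||_{U,M,k}. -/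
open MeasureTheory Filter Finset

noncomputable section

/-- Partial derivative in the `i`-th coordinate direction. -/
def pd {n : ℕ} (i : Fin n) (f : (Fin n → ℝ) → ℝ) : (Fin n → ℝ) → ℝ :=
  fun x => fderiv ℝ f x (Pi.single i 1)

/-- The multi-index derivative `∂^α f`. -/
def mderiv {n : ℕ} (α : Fin n → ℕ) (f : (Fin n → ℝ) → ℝ) : (Fin n → ℝ) → ℝ :=
  ((List.finRange n).flatMap fun i => List.replicate (α i) i).foldr pd f

/-- The length `|α|` of a multi-index. -/
def degree {n : ℕ} (α : Fin n → ℕ) : ℕ := ∑ i, α i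

/-- The finite set of all multi-indices `α` with `|α| ≤ k`. -/
def midx (n k : ℕ) : Finset (Fin n → ℕ) :=
  (Fintype.piFinset fun _ : Fin n => Finset.range (k + 1)).filter fun α => degree α ≤ k

/-- The `L²(U)` norm of `g`. -/
def L2 {n : ℕ} (U : Set (Fin n → ℝ)) (g : (Fin n → ℝ) → ℝ) : ℝ :=
  (∫ x in U, (g x) ^ 2) ^ ((1 : ℝ) / 2)

/-- The weighted Sobolev norm `|||u|||_{U,M,k} = ∑_{|α| ≤ k} Λ_k^{k-|α|} ‖∂^α u‖_{L²(U)}`. -/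
def wnorm {n : ℕ} (U : Set (Fin n → ℝ)) (M : ℕ → ℝ) (k : ℕ) (u : (Fin n → ℝ) → ℝ) : ℝ :=
  ∑ α ∈ midx n k, (Lam M k) ^ (k - degree α) * L2 U (mderiv α u)

/-- Ehrenpreis–Hörmander cut-off sequence supported in `U`, centered in `V`,
with constant `Q`. -/
def EHCutoff {n : ℕ} (χ : ℕ → (Fin n → ℝ) → ℝ) (U V : Set (Fin n → ℝ)) (Q : ℝ) : Prop :=
  ∀ k : ℕ, 1 ≤ k → ContDiff ℝ (⊤ : ℕ∞) (χ k) ∧ HasCompactSupport (χ k) ∧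
    tsupport (χ k) ⊆ U ∧ (∀ x ∈ V, χ k x = 1) ∧
    ∀ α : Fin n → ℕ, degree α ≤ k → ∀ x,
      |mderiv α (χ k) x| ≤ Q ^ degree α * (k : ℝ) ^ degree α

/-- The canonical (sorted) list of directions of a multi-index. -/
def can {n : ℕ} (α : Fin n → ℕ) : List (Fin n) :=
  (List.finRange n).flatMap fun i => List.replicate (α i) i

theorem mderiv_eq {n : ℕ} (α : Fin n → ℕ) (f : (Fin n → ℝ) → ℝ) :
    mderiv α f = (can α).foldr pd f := rfl

theorem can_sorted {n : ℕ} (α : Fin n → ℕ) : (can α).Pairwise (· ≤ ·) := by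
  unfold can
  rw [List.pairwise_flatMap]
  refine ⟨fun i _ => ?_, ?_⟩
  · simp [List.pairwise_replicate]
  · refine (List.pairwise_lt_finRange n).imp ?_
    intro i j hij x hx y hy
    rw [List.eq_of_mem_replicate hx, List.eq_of_mem_replicate hy]
    exact hij.le

theorem count_can {n : ℕ} (α : Fin n → ℕ) (i : Fin n) : (can α).count i = α i := by
  unfold can
  rw [List.count_flatMap]
  have : (List.map (List.count i ∘ fun i => List.replicate (α i) i) (List.finRange n)).sum
      = ∑ j, (if j = i then α j else 0) := by
    rw [← List.sum_ofFn, List.ofFn_eq_map]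
    congr 1
    apply List.map_congr_left
    intro j _
    simp [List.count_replicate]
  rw [this]
  simp

theorem degree_count {n : ℕ} (l : List (Fin n)) : degree (fun i => l.count i) = l.length := by
  unfold degree
  have := Multiset.sum_count_eq_card (s := Finset.univ) (m := (l : Multiset (Fin n))) (by simp)
  simpa using this

theorem length_can {n : ℕ} (α : Fin n → ℕ) : (can α).length = degree α := by
  rw [← degree_count]; simp [count_can]

theorem can_count {n : ℕ} (l : List (Fin n)) (hl : l.Pairwise (· ≤ ·)) :
    can (fun i => l.count i) = l := by
  refine List.Perm.eq_of_pairwise' (can_sorted _) hl ?_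
  rw [List.perm_iff_count]
  intro a
  rw [count_can]

/-- All ways of splitting a list into two complementary sublists. -/
def splits {ι : Type} : List ι → List (List ι × List ι)
  | [] => [([], [])]
  | i :: l => (splits l).map (fun p => (i :: p.1, p.2)) ++ (splits l).map (fun p => (p.1, i :: p.2))

theorem splits_length {ι : Type} (l : List ι) : (splits l).length = 2 ^ l.length := by
  induction l with
  | nil => rfl
  | cons i l ih => simp [splits, ih, pow_succ]; ring

theorem splits_mem {ι : Type} (l : List ι) : ∀ p ∈ splits l,
    p.1.Sublist l ∧ p.2.Sublist l ∧ p.1.length + p.2.length = l.length := by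
  induction l with
  | nil => simp [splits]
  | cons i l ih =>
    intro p hp
    simp only [splits, List.mem_append, List.mem_map] at hp
    rcases hp with ⟨q, hq, rfl⟩ | ⟨q, hq, rfl⟩
    · obtain ⟨h1, h2, h3⟩ := ih q hq
      exact ⟨h1.cons_cons i, h2.cons i, by simp; omega⟩
    · obtain ⟨h1, h2, h3⟩ := ih q hq
      exact ⟨h1.cons i, h2.cons_cons i, by simp; omega⟩

open Topology in
theorem foldr_germ {n : ℕ} (l : List (Fin n)) {f g : (Fin n → ℝ) → ℝ} {x : Fin n → ℝ}
    (h : f =ᶠ[𝓝 x] g) : l.foldr pd f =ᶠ[𝓝 x] l.foldr pd g := by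
  induction l with
  | nil => exact h
  | cons i l ih =>
    simp only [List.foldr_cons]
    filter_upwards [ih.fderiv (𝕜 := ℝ)] with y hy
    simp [pd, hy]

theorem foldr_zero {n : ℕ} (l : List (Fin n)) :
    l.foldr pd (fun _ : Fin n → ℝ => (0 : ℝ)) = fun _ => 0 := by
  induction l with
  | nil => rfl
  | cons i l ih =>
    simp only [List.foldr_cons, ih]
    funext x
    simp [pd]

theorem foldr_smooth {n : ℕ} (l : List (Fin n)) {f : (Fin n → ℝ) → ℝ} {U : Set (Fin n → ℝ)}
    (hU : IsOpen U) (hf : ContDiffOn ℝ (⊤ : ℕ∞) f U) :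
    ContDiffOn ℝ (⊤ : ℕ∞) (l.foldr pd f) U := by
  induction l with
  | nil => exact hf
  | cons i l ih =>
    simp only [List.foldr_cons]
    have h1 := ih.fderiv_of_isOpen hU (m := (⊤ : ℕ∞)) (by simp)
    exact h1.clm_apply contDiffOn_const

theorem hasFDerivAt_list {n : ℕ} {ι : Type} (L : List ι) (F G : ι → (Fin n → ℝ) → ℝ)
    (x : Fin n → ℝ) (hF : ∀ p, DifferentiableAt ℝ (F p) x) (hG : ∀ p, DifferentiableAt ℝ (G p) x)
    (i : Fin n) :
    DifferentiableAt ℝ (fun y => (L.map fun p => F p y * G p y).sum) x ∧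
    pd i (fun y => (L.map fun p => F p y * G p y).sum) x =
      (L.map fun p => pd i (F p) x * G p x).sum + (L.map fun p => F p x * pd i (G p) x).sum := by
  induction L with
  | nil => simp [pd]
  | cons p L ih =>
    obtain ⟨h1, h2⟩ := ih
    have h3 : DifferentiableAt ℝ (fun y => F p y * G p y) x := (hF p).mul (hG p)
    simp only [List.map_cons, List.sum_cons]
    refine ⟨h3.add h1, ?_⟩
    unfold pd at *
    rw [fderiv_fun_add h3 h1, fderiv_fun_mul (hF p) (hG p)]
    simp only [ContinuousLinearMap.add_apply, h2]
    simp
    ring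

theorem leibniz {n : ℕ} (l : List (Fin n)) {f g : (Fin n → ℝ) → ℝ} {U : Set (Fin n → ℝ)}
    (hU : IsOpen U) (hf : ContDiffOn ℝ (⊤ : ℕ∞) f U) (hg : ContDiffOn ℝ (⊤ : ℕ∞) g U) :
    ∀ x ∈ U, l.foldr pd (fun y => f y * g y) x =
      ((splits l).map fun p => p.1.foldr pd f x * p.2.foldr pd g x).sum := by
  induction l with
  | nil => simp [splits]
  | cons i l ih =>
    intro x hx
    have hd : ∀ (s : List (Fin n)) (h : (Fin n → ℝ) → ℝ), ContDiffOn ℝ (⊤ : ℕ∞) h U →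
        DifferentiableAt ℝ (s.foldr pd h) x := fun s h hh =>
      ((foldr_smooth s hU hh).contDiffAt (hU.mem_nhds hx)).differentiableAt (by simp)
    have h1 := (hasFDerivAt_list (splits l) (fun p => p.1.foldr pd f) (fun p => p.2.foldr pd g) x
      (fun p => hd _ _ hf) (fun p => hd _ _ hg) i).2
    have h2 : (l.foldr pd (fun y => f y * g y)) =ᶠ[nhds x]
        fun y => ((splits l).map fun p => p.1.foldr pd f y * p.2.foldr pd g y).sum := by
      filter_upwards [hU.mem_nhds hx] with y hy using ih y hy
    simp only [List.foldr_cons]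
    have h3 : pd i (l.foldr pd (fun y => f y * g y)) x = pd i
        (fun y => ((splits l).map fun p => p.1.foldr pd f y * p.2.foldr pd g y).sum) x := by
      unfold pd at *
      rw [h2.fderiv_eq]
    rw [h3, h1]
    simp [splits, Function.comp_def]

theorem L2_nonneg {n : ℕ} (U : Set (Fin n → ℝ)) (g : (Fin n → ℝ) → ℝ) : 0 ≤ L2 U g :=
  Real.rpow_nonneg (integral_nonneg fun x => sq_nonneg _) _

theorem L2_eq {n : ℕ} {U : Set (Fin n → ℝ)} {g : (Fin n → ℝ) → ℝ}
    (hg : MemLp g 2 (volume.restrict U)) : L2 U g = lpNorm g 2 (volume.restrict U) := by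
  rw [lpNorm_eq_integral_norm_rpow_toReal (by simp) (by simp) hg.aestronglyMeasurable]
  simp [L2]

theorem L2_list {n : ℕ} {ι : Type} {U : Set (Fin n → ℝ)} (L : List ι) (c : ι → ℝ)
    (g : ι → (Fin n → ℝ) → ℝ) (hc : ∀ p ∈ L, 0 ≤ c p)
    (hg : ∀ p ∈ L, MemLp (g p) 2 (volume.restrict U)) :
    MemLp (fun x => (L.map fun p => c p * |g p x|).sum) 2 (volume.restrict U) ∧
    L2 U (fun x => (L.map fun p => c p * |g p x|).sum) ≤ (L.map fun p => c p * L2 U (g p)).sum := by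
  induction L with
  | nil => simp [L2]
  | cons p L ih =>
    obtain ⟨h1, h2⟩ := ih (fun q hq => hc q (by simp [hq])) (fun q hq => hg q (by simp [hq]))
    have hp := hg p (by simp)
    have h3 : MemLp (fun x => c p * |g p x|) 2 (volume.restrict U) := hp.abs.const_mul _
    simp only [List.map_cons, List.sum_cons]
    have h4 := h3.add h1
    refine ⟨h4, ?_⟩
    have h5 : L2 U (fun x => c p * |g p x|) = c p * L2 U (g p) := by
      unfold L2
      simp only [mul_pow, sq_abs]
      rw [integral_const_mul, Real.mul_rpow (sq_nonneg _) (integral_nonneg fun x => sq_nonneg _),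
        ← Real.sqrt_eq_rpow, Real.sqrt_sq (hc p (by simp))]
    rw [← h5]
    refine le_trans ?_ (add_le_add_right h2 _)
    rw [L2_eq h3, L2_eq h1]
    refine le_trans (L2_eq h4).le ?_
    exact lpNorm_add_le h3 (by norm_num)

theorem L2_mono {n : ℕ} {U : Set (Fin n → ℝ)} (hU : IsOpen U) {F G : (Fin n → ℝ) → ℝ}
    (hG : MemLp G 2 (volume.restrict U)) (h0 : ∀ x, x ∉ U → F x = 0)
    (h : ∀ x ∈ U, |F x| ≤ G x) : L2 Set.univ F ≤ L2 U G := by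
  unfold L2
  refine Real.rpow_le_rpow (integral_nonneg fun x => sq_nonneg _) ?_ (by norm_num)
  rw [setIntegral_univ, ← setIntegral_eq_integral_of_forall_compl_eq_zero (s := U)
    (fun x hx => by simp [h0 x hx])]
  refine integral_mono_of_nonneg (Eventually.of_forall fun x => sq_nonneg _) hG.integrable_sq ?_
  refine (ae_restrict_iff' hU.measurableSet).2 (Eventually.of_forall fun x hx => ?_)
  exact sq_le_sq' (by linarith [neg_le_of_abs_le (h x hx)]) (le_of_abs_le (h x hx))

theorem card_midx (n k : ℕ) : (midx n k).card ≤ (k + 1) ^ n := by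
  refine (Finset.card_filter_le _ _).trans ?_
  simp

theorem mem_midx {n k : ℕ} {α : Fin n → ℕ} : α ∈ midx n k ↔ degree α ≤ k := by
  unfold midx
  simp only [Finset.mem_filter, Fintype.mem_piFinset, Finset.mem_range, and_iff_right_iff_imp]
  intro h i
  have : α i ≤ degree α := Finset.single_le_sum (f := α) (fun _ _ => Nat.zero_le _) (Finset.mem_univ i)
  omega

theorem Lam_bound (M : ℕ → ℝ) (hM : IsWeightSeq M) (hfact : FactBound M) :
    ∃ A : ℝ, 0 < A ∧ ∀ k : ℕ, 1 ≤ k → (k : ℝ) ≤ A * Lam M k := by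
  obtain ⟨C, hC, h, hh, hb⟩ := hfact
  have hM0 := hM.1
  have hD : (1 : ℝ) ≤ max C 1 := le_max_right _ _
  refine ⟨Real.exp 1 * max C 1 * h, by positivity, fun k hk => ?_⟩
  have hL : (Lam M k) ^ k = M k := Real.rpow_inv_natCast_pow (hM0 k).le (by omega)
  have hL0 : 0 ≤ Lam M k := Real.rpow_nonneg (hM0 k).le _
  refine le_of_pow_le_pow_left₀ (n := k) (by omega) (by positivity) ?_
  have h1 := Real.pow_div_factorial_le_exp (x := (k : ℝ)) (by positivity) k
  rw [div_le_iff₀ (by positivity)] at h1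
  have h2 : Real.exp k = Real.exp 1 ^ k := by rw [← Real.exp_nat_mul]; simp
  have h3 : C ≤ (max C 1) ^ k := (le_max_left C 1).trans (le_self_pow₀ hD (by omega))
  calc (k : ℝ) ^ k ≤ Real.exp 1 ^ k * (k.factorial : ℝ) := by rw [← h2]; exact h1
    _ ≤ Real.exp 1 ^ k * (C * h ^ k * M k) := by gcongr; exact hb k
    _ ≤ Real.exp 1 ^ k * ((max C 1) ^ k * h ^ k * M k) := by have := hM0 k; gcongr
    _ = _ := by simp only [mul_pow, hL]; ring

theorem wnorm_term {n : ℕ} (U : Set (Fin n → ℝ)) (M : ℕ → ℝ) (k : ℕ) (u : (Fin n → ℝ) → ℝ)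
    (hL : 0 ≤ Lam M k) (α : Fin n → ℕ) (hα : degree α ≤ k) :
    (Lam M k) ^ (k - degree α) * L2 U (mderiv α u) ≤ wnorm U M k u := by
  unfold wnorm
  exact Finset.single_le_sum (f := fun α => (Lam M k) ^ (k - degree α) * L2 U (mderiv α u))
    (fun β _ => mul_nonneg (pow_nonneg hL _) (L2_nonneg _ _)) (mem_midx.2 hα)

theorem list_abs_le {ι : Type} (L : List ι) (a b : ι → ℝ) (h : ∀ p ∈ L, |a p| ≤ b p) :
    |(L.map a).sum| ≤ (L.map b).sum := by
  induction L with
  | nil => simp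
  | cons p L ih =>
    simp only [List.map_cons, List.sum_cons]
    exact (abs_add_le _ _).trans
      (add_le_add (h p (by simp)) (ih fun q hq => h q (by simp [hq])))

/-- Lemma 4 of the paper: given an Ehrenpreis–Hörmander cut-off sequence
supported in `U` (centered in `V ⋐ U`) and a weight sequence `M` satisfying the factorial
bound, there is `γ > 0` such that `|||χ_k u|||_{ℝ^n,M,k} ≤ γ^k |||u|||_{U,M,k}` for all
`k ≥ 1` and all `u ∈ C^∞(U)` with `∂^α u ∈ L²(U)` for `|α| ≤ k`; here `χ_k u` is extended
by `0` outside `U`. -/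
theorem statement10 {n : ℕ} (M : ℕ → ℝ) (hM : IsWeightSeq M) (hfact : FactBound M)
    (U V : Set (Fin n → ℝ)) (hU : IsOpen U) (hV : IsOpen V)
    (hVU : closure V ⊆ U) (hVc : IsCompact (closure V))
    (Q : ℝ) (hQ : 0 < Q) (χ : ℕ → (Fin n → ℝ) → ℝ) (hχ : EHCutoff χ U V Q) :
    ∃ γ : ℝ, 0 < γ ∧ ∀ k : ℕ, 1 ≤ k → ∀ u : (Fin n → ℝ) → ℝ,
      ContDiffOn ℝ (⊤ : ℕ∞) u U →
      (∀ α : Fin n → ℕ, degree α ≤ k → MemLp (mderiv α u) 2 (volume.restrict U)) →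
      wnorm Set.univ M k (U.indicator fun x => χ k x * u x) ≤
        γ ^ k * wnorm U M k u := by
  obtain ⟨A, hA, hk⟩ := Lam_bound M hM hfact
  set B : ℝ := max (Q * A) 1 with hB
  have hB1 : 1 ≤ B := le_max_right _ _
  refine ⟨2 ^ n * (2 * B), by positivity, ?_⟩
  intro k hk1 u hu hmem
  obtain ⟨hsm, -, hsupp, -, hbd⟩ := hχ k hk1
  have hL0 : 0 ≤ Lam M k := Real.rpow_nonneg (hM.1 k).le _
  have hW0 : 0 ≤ wnorm U M k u :=
    Finset.sum_nonneg fun β _ => mul_nonneg (pow_nonneg hL0 _) (L2_nonneg _ _)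
  have key : ∀ α ∈ midx n k, (Lam M k) ^ (k - degree α) *
      L2 Set.univ (mderiv α (U.indicator fun x => χ k x * u x)) ≤ (2 * B) ^ k * wnorm U M k u := by
    intro α hα
    rw [mem_midx] at hα
    have hsp : ∀ p ∈ splits (can α), ∃ β γ : Fin n → ℕ, can β = p.1 ∧ can γ = p.2 ∧
        degree β = p.1.length ∧ degree γ = p.2.length ∧ degree β + degree γ = degree α := by
      intro p hp
      obtain ⟨h1, h2, h3⟩ := splits_mem _ p hp
      refine ⟨_, _, can_count _ ((can_sorted α).sublist h1), can_count _ ((can_sorted α).sublist h2),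
        degree_count _, degree_count _, ?_⟩
      rw [degree_count, degree_count, h3, length_can]
    obtain ⟨h1, h2⟩ := L2_list (U := U) (splits (can α))
      (fun p => Q ^ p.1.length * (k : ℝ) ^ p.1.length) (fun p => p.2.foldr pd u)
      (fun p _ => by positivity) (by
        intro p hp
        obtain ⟨β, γ, -, e2, -, -, e5⟩ := hsp p hp
        simp only [← e2]
        exact hmem γ (by omega))
    have h3 := L2_mono (F := mderiv α (U.indicator fun x => χ k x * u x)) hU h1 (by
        intro x hx
        have hx' : x ∉ tsupport (χ k) := fun h => hx (hsupp h)
        have hz : (U.indicator fun x => χ k x * u x) =ᶠ[nhds x] fun _ => 0 := by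
          filter_upwards [(isClosed_tsupport (χ k)).isOpen_compl.mem_nhds hx'] with y hy
          by_cases hyU : y ∈ U
          · simp [hyU, image_eq_zero_of_notMem_tsupport hy]
          · simp [hyU]
        have := (foldr_germ (can α) hz).eq_of_nhds
        rw [foldr_zero] at this
        exact this) (by
        intro x hx
        have hz : (U.indicator fun x => χ k x * u x) =ᶠ[nhds x] fun x => χ k x * u x := by
          filter_upwards [hU.mem_nhds hx] with y hy
          simp [hy]
        rw [mderiv_eq, (foldr_germ (can α) hz).eq_of_nhds, leibniz (can α) hU hsm.contDiffOn hu x hx]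
        refine list_abs_le _ _ _ ?_
        intro p hp
        obtain ⟨β, γ, e1, -, e3, -, e5⟩ := hsp p hp
        simp only [abs_mul]
        refine mul_le_mul_of_nonneg_right ?_ (abs_nonneg _)
        have := hbd β (by omega) x
        rwa [mderiv_eq, e1, e3] at this)
    have h4 := h3.trans h2
    refine (mul_le_mul_of_nonneg_left h4 (pow_nonneg hL0 _)).trans ?_
    rw [← List.sum_map_mul_left]
    refine (List.sum_le_card_nsmul _ (B ^ k * wnorm U M k u) ?_).trans ?_
    · intro y hy
      obtain ⟨p, hp, rfl⟩ := List.mem_map.1 hy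
      obtain ⟨β, γ, e1, e2, e3, e4, e5⟩ := hsp p hp
      have ht := wnorm_term U M k u hL0 γ (by omega)
      rw [mderiv_eq] at ht
      simp only [← e2, ← e3]
      have hq : Q ^ degree β * (k : ℝ) ^ degree β ≤ B ^ k * Lam M k ^ degree β := by
        calc Q ^ degree β * (k : ℝ) ^ degree β = (Q * k) ^ degree β := by rw [mul_pow]
          _ ≤ (B * Lam M k) ^ degree β := by
            refine pow_le_pow_left₀ (by positivity) ?_ _
            calc Q * (k : ℝ) ≤ Q * (A * Lam M k) := by gcongr; exact hk k hk1
              _ = (Q * A) * Lam M k := by ring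
              _ ≤ B * Lam M k := by gcongr; exact le_max_left _ _
          _ = B ^ degree β * Lam M k ^ degree β := mul_pow _ _ _
          _ ≤ B ^ k * Lam M k ^ degree β := by
            gcongr
            omega
      have e6 : k - degree γ = (k - degree α) + degree β := by omega
      rw [e6, pow_add] at ht
      have hl2 := L2_nonneg U ((can γ).foldr pd u)
      calc Lam M k ^ (k - degree α) * (Q ^ degree β * (k : ℝ) ^ degree β * L2 U ((can γ).foldr pd u))
          ≤ Lam M k ^ (k - degree α) * (B ^ k * Lam M k ^ degree β * L2 U ((can γ).foldr pd u)) := by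
            gcongr
        _ = B ^ k * (Lam M k ^ (k - degree α) * Lam M k ^ degree β * L2 U ((can γ).foldr pd u)) := by
            ring
        _ ≤ _ := by gcongr
    · rw [List.length_map, splits_length, length_can, nsmul_eq_mul, mul_pow, mul_assoc]
      push_cast
      gcongr
      norm_num
  unfold wnorm at key ⊢
  refine (Finset.sum_le_card_nsmul _ _ _ key).trans ?_
  rw [nsmul_eq_mul, mul_pow ((2 : ℝ) ^ n) (2 * B) k, mul_assoc (((2 : ℝ) ^ n) ^ k)]
  refine mul_le_mul_of_nonneg_right ?_ (mul_nonneg (by positivity) hW0)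
  have h5 : (midx n k).card ≤ (2 ^ n) ^ k := by
    refine (card_midx n k).trans ?_
    rw [← pow_mul, mul_comm, pow_mul]
    exact Nat.pow_le_pow_left (Nat.lt_two_pow_self) n
  exact_mod_cast h5

end
end

section
/- Let Ω ⊆ ℝ^n be open, M an admissible weight sequence, and P = Σ_{|α|≤m} a_α ∂^α a linear partial differential operator whose coefficients a_α belong to the Denjoy–Carleman class E^{M}(Ω); let P^t φ = Σ_{|α|≤m} (−1)^{|α|} ∂^α(a_α φ) denote its formal transpose. Suppose there is an open set U₀ ⊆ Ω with the following property: for all open sets V ⋐ U ⊆ U₀, every u ∈ L²(U) with ∫_U u · P^t φ dx = 0 for all φ ∈ C_c^∞(U) agrees almost everywhere on V with a function ũ ∈ C^∞(V) for which there exist C', h' > 0 with sup_V |∂^α ũ| ≤ C' (h')^{|α|} M_{|α|} for all α. Then for all open sets V ⋐ U ⊆ U₀ there exist constants C, h > 0 such that for every k ≥ 0 and every u ∈ L²(U) with ∫_U u · P^t φ dx = 0 for all φ ∈ C_c^∞(U), the smooth representative ũ of u on V satisfies ( Σ_{|α|≤k} ‖∂^α ũ‖²_{L²(V)} )^{1/2}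 ≤ C h^k M_k ‖u‖_{L²(U)}. -/
open MeasureTheory Filter Finset

noncomputable section

/-- The Denjoy–Carleman class `E^{M}(Ω)`: smooth functions on `Ω` such that on every compact
`K ⊆ Ω` the derivatives satisfy `|∂^α f| ≤ C h^{|α|} M_{|α|}`. -/
def DCclass {n : ℕ} (M : ℕ → ℝ) (Ω : Set (Fin n → ℝ)) : Set ((Fin n → ℝ) → ℝ) :=
  {f | ContDiffOn ℝ (⊤ : ℕ∞) f Ω ∧ ∀ K : Set (Fin n → ℝ), K ⊆ Ω → IsCompact K →
    ∃ C > 0, ∃ h > 0, ∀ (α : Fin n → ℕ), ∀ x ∈ K,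
      |mderiv α f x| ≤ C * h ^ degree α * M (degree α)}

/-- The formal transpose `P^t φ = ∑_{|α| ≤ m} (-1)^{|α|} ∂^α (a_α φ)` of the operator
`P = ∑_{|α| ≤ m} a_α ∂^α`. -/
def transposeOp {n : ℕ} (m : ℕ) (a : (Fin n → ℕ) → (Fin n → ℝ) → ℝ)
    (φ : (Fin n → ℝ) → ℝ) : (Fin n → ℝ) → ℝ :=
  fun x => ∑ α ∈ midx n m, (-1 : ℝ) ^ degree α * mderiv α (fun y => a α y * φ y) x

/-- `u ∈ L²(U)` is a weak (distributional) solution of `Pu = 0` in `U`: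
`∫_U u P^t φ = 0` for every test function `φ ∈ C_c^∞(U)`. -/
def WeakKernel {n : ℕ} (m : ℕ) (a : (Fin n → ℕ) → (Fin n → ℝ) → ℝ)
    (U : Set (Fin n → ℝ)) (u : (Fin n → ℝ) → ℝ) : Prop :=
  ∀ φ : (Fin n → ℝ) → ℝ, ContDiff ℝ (⊤ : ℕ∞) φ → HasCompactSupport φ →
    tsupport φ ⊆ U → ∫ x in U, u x * transposeOp m a φ x = 0

/-! ### Helper lemmas -/

lemma aux_pd_contDiff {n : ℕ} (l : List (Fin n)) {f : (Fin n → ℝ) → ℝ}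
    (hf : ContDiff ℝ (⊤ : ℕ∞) f) : ContDiff ℝ (⊤ : ℕ∞) (l.foldr pd f) := by
  induction l with
  | nil => exact hf
  | cons i l ih =>
    have h : ContDiff ℝ (⊤ : ℕ∞) (fderiv ℝ (l.foldr pd f)) := ih.fderiv_right (by simp)
    exact h.clm_apply contDiff_const

lemma aux_pd_tsupport {n : ℕ} (l : List (Fin n)) (f : (Fin n → ℝ) → ℝ) :
    tsupport (l.foldr pd f) ⊆ tsupport f := by
  induction l with
  | nil => exact subset_rfl
  | cons i l ih => exact (tsupport_fderiv_apply_subset ℝ (f := l.foldr pd f) _).trans ih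

lemma aux_pd_contDiffOn {n : ℕ} {V : Set (Fin n → ℝ)} (hV : IsOpen V) (l : List (Fin n))
    {f : (Fin n → ℝ) → ℝ}
    (hf : ContDiffOn ℝ (⊤ : ℕ∞) f V) : ContDiffOn ℝ (⊤ : ℕ∞) (l.foldr pd f) V := by
  induction l with
  | nil => exact hf
  | cons i l ih =>
    have h : ContDiffOn ℝ (⊤ : ℕ∞) (fderiv ℝ (l.foldr pd f)) V :=
      ih.fderiv_of_isOpen hV (by simp)
    exact h.clm_apply contDiffOn_const

lemma aux_contDiff_mul {n : ℕ} {V : Set (Fin n → ℝ)} (hV : IsOpen V)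
    {f ψ : (Fin n → ℝ) → ℝ} (hf : ContDiffOn ℝ (⊤ : ℕ∞) f V) (hψ : ContDiff ℝ (⊤ : ℕ∞) ψ)
    (hs : tsupport ψ ⊆ V) : ContDiff ℝ (⊤ : ℕ∞) (fun x => f x * ψ x) := by
  rw [contDiff_iff_contDiffAt]
  intro x
  by_cases hx : x ∈ tsupport (fun x => f x * ψ x)
  swap
  · exact contDiffAt_const.congr_of_eventuallyEq (notMem_tsupport_iff_eventuallyEq.1 hx)
  have hxV : x ∈ V := hs (tsupport_mul_subset_right hx)
  exact (hf.contDiffAt (hV.mem_nhds hxV)).mul hψ.contDiffAt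

lemma aux_integrable {n : ℕ} {V : Set (Fin n → ℝ)} (hV : IsOpen V)
    {f ψ : (Fin n → ℝ) → ℝ} (hf : ContDiffOn ℝ (⊤ : ℕ∞) f V) (hψ : ContDiff ℝ (⊤ : ℕ∞) ψ)
    (hc : HasCompactSupport ψ)
    (hs : tsupport ψ ⊆ V) : Integrable (fun x => f x * ψ x) volume :=
  (aux_contDiff_mul hV hf hψ hs).continuous.integrable_of_hasCompactSupport hc.mul_left

lemma aux_ibp {n : ℕ} {V : Set (Fin n → ℝ)} (hV : IsOpen V) (l : List (Fin n))
    {f : (Fin n → ℝ) → ℝ} (hf : ContDiffOn ℝ (⊤ : ℕ∞) f V) :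
    ∀ ψ : (Fin n → ℝ) → ℝ, ContDiff ℝ (⊤ : ℕ∞) ψ → HasCompactSupport ψ → tsupport ψ ⊆ V →
    ∫ x, f x * (l.reverse.foldr pd ψ) x = (-1) ^ l.length * ∫ x, (l.foldr pd f) x * ψ x := by
  induction l with
  | nil => intro ψ _ _ _; simp
  | cons i l ih =>
    intro ψ hψ hc hs
    have h1 : ContDiff ℝ (⊤ : ℕ∞) (pd i ψ) := aux_pd_contDiff [i] hψ
    have h2 : tsupport (pd i ψ) ⊆ tsupport ψ := aux_pd_tsupport [i] ψ
    have h3 : HasCompactSupport (pd i ψ) := hc.of_isClosed_subset (isClosed_tsupport _) h2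
    have hl := aux_pd_contDiffOn hV l hf
    have hl' := aux_pd_contDiffOn hV (i :: l) hf
    have e : (i :: l).reverse.foldr pd ψ = l.reverse.foldr pd (pd i ψ) := by simp
    rw [e, ih (pd i ψ) h1 h3 (h2.trans hs)]
    have key : ∫ x, (l.foldr pd f) x * fderiv ℝ ψ x (Pi.single i 1)
        = - ∫ x, fderiv ℝ (l.foldr pd f) x (Pi.single i 1) * ψ x := by
      apply integral_mul_fderiv_eq_neg_fderiv_mul_of_integrable
      · exact aux_integrable hV hl' hψ hc hs
      · exact aux_integrable hV hl h1 h3 (h2.trans hs)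
      · exact aux_integrable hV hl hψ hc hs
      · intro x hx
        exact (hl.contDiffAt (hV.mem_nhds (hs hx))).differentiableAt (by simp)
      · intro x hx
        exact hψ.contDiffAt.differentiableAt (by simp)
    have key' : ∫ x, (l.foldr pd f) x * pd i ψ x
        = - ∫ x, ((i :: l).foldr pd f) x * ψ x := key
    rw [key', List.length_cons, pow_succ]
    ring

lemma aux_upper_s15 {n : ℕ} {V : Set (Fin n → ℝ)} (hV : IsOpen V)
    {g : (Fin n → ℝ) → ℝ} (hg : ContDiffOn ℝ (⊤ : ℕ∞) g V) (B : ℝ)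
    (h : ∀ ψ : (Fin n → ℝ) → ℝ, ContDiff ℝ (⊤ : ℕ∞) ψ → HasCompactSupport ψ → tsupport ψ ⊆ V →
      ∫ x, g x * ψ x ≤ B * ∫ x, |ψ x|) : ∀ x ∈ V, g x ≤ B := by
  intro x hx
  by_contra! hlt
  obtain ⟨B', h1, h2⟩ := exists_between hlt
  have hev : ∀ᶠ y in nhds x, y ∈ V ∧ B' < g y :=
    (hV.eventually_mem hx).and
      ((hg.continuousOn.continuousAt (hV.mem_nhds hx)).eventually (lt_mem_nhds h2))
  obtain ⟨r, hr, hrs⟩ := Metric.eventually_nhds_iff_ball.1 hev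
  let ψ : ContDiffBump x := ⟨r / 4, r / 2, by positivity, by linarith⟩
  have hts : tsupport ψ ⊆ Metric.ball x r := by
    rw [ψ.tsupport_eq]
    exact Metric.closedBall_subset_ball (by change r / 2 < r; linarith)
  have hsV : tsupport ψ ⊆ V := fun y hy => (hrs y (hts hy)).1
  have hpos : 0 < ∫ y, ψ y := ψ.integral_pos
  have hb := h ψ ψ.contDiff ψ.hasCompactSupport hsV
  have habs : ∫ y, |ψ y| = ∫ y, ψ y := by
    congr 1; ext y; exact abs_of_nonneg ψ.nonneg
  rw [habs] at hb
  have hlow : B' * ∫ y, ψ y ≤ ∫ y, g y * ψ y := by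
    rw [← integral_const_mul]
    apply integral_mono (ψ.integrable.const_mul _)
      (aux_integrable hV hg ψ.contDiff ψ.hasCompactSupport hsV)
    intro y
    by_cases hy : y ∈ tsupport ψ
    · exact mul_le_mul_of_nonneg_right (hrs y (hts hy)).2.le ψ.nonneg
    · simp [image_eq_zero_of_notMem_tsupport hy]
  nlinarith

lemma aux_abs {n : ℕ} {V : Set (Fin n → ℝ)} (hV : IsOpen V)
    {g : (Fin n → ℝ) → ℝ} (hg : ContDiffOn ℝ (⊤ : ℕ∞) g V) (B : ℝ)
    (h : ∀ ψ : (Fin n → ℝ) → ℝ, ContDiff ℝ (⊤ : ℕ∞) ψ → HasCompactSupport ψ → tsupport ψ ⊆ V →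
      |∫ x, g x * ψ x| ≤ B * ∫ x, |ψ x|) : ∀ x ∈ V, |g x| ≤ B := by
  intro x hx
  rw [abs_le']
  refine ⟨aux_upper_s15 hV hg B (fun ψ a b c => (le_abs_self _).trans (h ψ a b c)) x hx, ?_⟩
  refine aux_upper_s15 (g := fun x => - g x) hV hg.neg B (fun ψ a b c => ?_) x hx
  have := (neg_le_abs _).trans (h ψ a b c)
  simpa [integral_neg] using this

/-- Uniform boundedness with a countable family of weights (Baire). -/
lemma aux_baire {E : Type*} [NormedAddCommGroup E] [NormedSpace ℝ E] [CompleteSpace E]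
    {ι : Type*} (ℓ : ι → E →L[ℝ] ℝ) (w : ℕ → ι → ℝ)
    (h : ∀ u : E, ∃ N : ℕ, ∀ i, |ℓ i u| ≤ w N i) :
    ∃ N : ℕ, ∃ C > 0, ∀ i, ∀ u : E, |ℓ i u| ≤ C * w N i * ‖u‖ := by
  let S : ℕ → Set E := fun N => {u | ∀ i, |ℓ i u| ≤ w N i}
  have hS : ∀ N, IsClosed (S N) := by
    intro N
    simp only [S, Set.ofPred_forall]
    exact isClosed_iInter fun i => isClosed_le ((ℓ i).continuous.abs) continuous_const
  have hU : ⋃ N, S N = Set.univ := by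
    ext u; simpa [S] using h u
  obtain ⟨N, u₀, hu₀⟩ := nonempty_interior_of_iUnion_of_closed hS hU
  obtain ⟨r, hr, hrs⟩ := Metric.mem_nhds_iff.1 (mem_interior_iff_mem_nhds.1 hu₀)
  refine ⟨N, 4 / r, by positivity, fun i u => ?_⟩
  by_cases hu : u = 0
  · simp [hu]
  have hn : 0 < ‖u‖ := norm_pos_iff.2 hu
  set t : ℝ := r / (2 * ‖u‖) with ht
  have htp : 0 < t := by positivity
  have m1 : u₀ + t • u ∈ S N := by
    apply hrs
    rw [Metric.mem_ball, dist_eq_norm, add_sub_cancel_left, norm_smul, Real.norm_of_nonneg htp.le,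
      ht]
    field_simp
    linarith
  have m0 : u₀ ∈ S N := hrs (Metric.mem_ball_self hr)
  have a1 := m1 i
  have a0 := m0 i
  have e : t * ℓ i u = ℓ i (u₀ + t • u) - ℓ i u₀ := by simp
  have b : t * |ℓ i u| ≤ 2 * w N i := by
    have : t * |ℓ i u| = |t * ℓ i u| := by rw [abs_mul, abs_of_pos htp]
    rw [this, e]
    have := abs_sub (ℓ i (u₀ + t • u)) (ℓ i u₀)
    linarith
  have : |ℓ i u| ≤ 2 * w N i / t := by rw [le_div_iff₀ htp]; linarith
  refine this.trans_eq ?_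
  rw [ht]; field_simp; ring

/-- Pairing with a fixed `L²` function as a continuous functional. -/
lemma aux_pair {n : ℕ} (U : Set (Fin n → ℝ)) (g : (Fin n → ℝ) → ℝ)
    (hg : MemLp g 2 (volume.restrict U)) :
    ∃ ℓ : Lp ℝ 2 (volume.restrict U) →L[ℝ] ℝ, ∀ u, ℓ u = ∫ x in U, u x * g x := by
  refine ⟨innerSL ℝ (hg.toLp g), fun u => ?_⟩
  rw [innerSL_apply_apply, L2.inner_def]
  apply integral_congr_ae
  filter_upwards [hg.coeFn_toLp] with x hx
  simp [hx]

lemma aux_transpose {n : ℕ} {m : ℕ} {a : (Fin n → ℕ) → (Fin n → ℝ) → ℝ}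
    {Ω : Set (Fin n → ℝ)} (hΩ : IsOpen Ω)
    (ha : ∀ α ∈ midx n m, ContDiffOn ℝ (⊤ : ℕ∞) (a α) Ω) (φ : (Fin n → ℝ) → ℝ)
    (hφ : ContDiff ℝ (⊤ : ℕ∞) φ) (hc : HasCompactSupport φ) (hs : tsupport φ ⊆ Ω)
    (μ : Measure (Fin n → ℝ)) [IsFiniteMeasureOnCompacts μ] :
    MemLp (transposeOp m a φ) 2 μ := by
  unfold transposeOp
  apply memLp_finsetSum
  intro α hα
  apply MemLp.const_mul
  have h1 := aux_contDiff_mul hΩ (ha α hα) hφ hs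
  apply (aux_pd_contDiff _ h1).continuous.memLp_of_hasCompactSupport
  refine IsCompact.of_isClosed_subset (s := tsupport fun y => a α y * φ y) ?_
    (isClosed_tsupport _) (aux_pd_tsupport _ _)
  exact hc.mul_left

lemma aux_len {n : ℕ} (α : Fin n → ℕ) :
    ((List.finRange n).flatMap fun i => List.replicate (α i) i).length = degree α := by
  simp [degree, List.length_flatMap, Fin.sum_univ_def]

lemma aux_mono_s15 {M : ℕ → ℝ} (hM : IsWeightSeq M) : Monotone M := by
  obtain ⟨h0, h1, h2, h3, -⟩ := hM
  apply monotone_nat_of_le_succ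
  intro k
  induction k with
  | zero => simpa [h1] using h2
  | succ k ih =>
    have a := h3 k
    have p := h0 (k + 1)
    have q := h0 (k + 2)
    by_contra! hlt
    have : M k * M (k + 2) < M (k + 1) * M (k + 1) :=
      mul_lt_mul' ih hlt q.le p
    nlinarith

lemma aux_card (n k : ℕ) : ((midx n k).card : ℝ) ≤ (2 ^ n) ^ k := by
  have h : (midx n k).card ≤ (k + 1) ^ n := by
    refine (Finset.card_filter_le _ _).trans ?_
    simp
  have h2 : (k + 1) ^ n ≤ (2 ^ k) ^ n := Nat.pow_le_pow_left (Nat.lt_two_pow_self) n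
  have h3 : (midx n k).card ≤ (2 ^ n) ^ k := by
    rw [← pow_mul, mul_comm, pow_mul]; exact h.trans h2
  exact_mod_cast h3

lemma aux_ibp_u {n : ℕ} {V U : Set (Fin n → ℝ)} (hV : IsOpen V) (hVU : V ⊆ U)
    {u v : (Fin n → ℝ) → ℝ} (hv : ContDiffOn ℝ (⊤ : ℕ∞) v V)
    (huv : ∀ᵐ x ∂volume, x ∈ V → u x = v x) (l : List (Fin n))
    (ψ : (Fin n → ℝ) → ℝ) (hψ : ContDiff ℝ (⊤ : ℕ∞) ψ) (hc : HasCompactSupport ψ)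
    (hs : tsupport ψ ⊆ V) :
    |∫ x in U, u x * (l.reverse.foldr pd ψ) x| = |∫ x, (l.foldr pd v) x * ψ x| := by
  have h0 : ∀ x, x ∉ V → (l.reverse.foldr pd ψ) x = 0 := fun x hx =>
    image_eq_zero_of_notMem_tsupport fun h => hx (hs (aux_pd_tsupport _ _ h))
  have h1 : ∫ x in U, u x * (l.reverse.foldr pd ψ) x = ∫ x, u x * (l.reverse.foldr pd ψ) x := by
    apply setIntegral_eq_integral_of_forall_compl_eq_zero
    intro x hx
    rw [h0 x (fun h => hx (hVU h)), mul_zero]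
  have h2 : ∫ x, u x * (l.reverse.foldr pd ψ) x = ∫ x, v x * (l.reverse.foldr pd ψ) x := by
    apply integral_congr_ae
    filter_upwards [huv] with x hx
    by_cases hxV : x ∈ V
    · rw [hx hxV]
    · rw [h0 x hxV, mul_zero, mul_zero]
  rw [h1, h2, aux_ibp hV l hv ψ hψ hc hs, abs_mul, abs_pow]
  simp

/-- Proposition 2 of the paper: let `P = ∑_{|α|≤m} a_α ∂^α` have
coefficients of class `E^{M}(Ω)`, `M` admissible, and suppose that on some open `U₀ ⊆ Ω`
every `L²` weak solution of `Pu = 0` is (a.e. on each `V ⋐ U ⊆ U₀`) a function with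
`|∂^α ũ| ≤ C' h'^{|α|} M_{|α|}` on `V`.  Then for all `V ⋐ U ⊆ U₀` there are `C, h > 0`
such that for every `k`, every weak solution `u ∈ L²(U)` of `Pu = 0`, and its smooth
representative `ũ` on `V`,
`(∑_{|α|≤k} ‖∂^α ũ‖²_{L²(V)})^{1/2} ≤ C h^k M_k ‖u‖_{L²(U)}`. -/
theorem statement15 {n : ℕ} (M : ℕ → ℝ) (hM : IsAdmissible M)
    (Ω : Set (Fin n → ℝ)) (hΩ : IsOpen Ω) (m : ℕ)
    (a : (Fin n → ℕ) → (Fin n → ℝ) → ℝ) (ha : ∀ α ∈ midx n m, a α ∈ DCclass M Ω)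
    (U₀ : Set (Fin n → ℝ)) (hU₀o : IsOpen U₀) (hU₀Ω : U₀ ⊆ Ω)
    (hhypo : ∀ V U : Set (Fin n → ℝ), IsOpen V → IsOpen U → closure V ⊆ U →
      IsCompact (closure V) → U ⊆ U₀ →
      ∀ u : (Fin n → ℝ) → ℝ, MemLp u 2 (volume.restrict U) → WeakKernel m a U u →
      ∃ v : (Fin n → ℝ) → ℝ, ContDiffOn ℝ (⊤ : ℕ∞) v V ∧
        (∀ᵐ x ∂volume, x ∈ V → u x = v x) ∧
        ∃ C' > 0, ∃ h' > 0, ∀ α : Fin n → ℕ, ∀ x ∈ V,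
          |mderiv α v x| ≤ C' * h' ^ degree α * M (degree α)) :
    ∀ V U : Set (Fin n → ℝ), IsOpen V → IsOpen U → closure V ⊆ U →
      IsCompact (closure V) → U ⊆ U₀ →
      ∃ C > 0, ∃ h > 0, ∀ k : ℕ,
        ∀ u : (Fin n → ℝ) → ℝ, MemLp u 2 (volume.restrict U) → WeakKernel m a U u →
        ∀ v : (Fin n → ℝ) → ℝ, ContDiffOn ℝ (⊤ : ℕ∞) v V →
          (∀ᵐ x ∂volume, x ∈ V → u x = v x) →
          (∑ α ∈ midx n k, ∫ x in V, (mderiv α v x) ^ 2) ^ ((1 : ℝ) / 2) ≤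
            C * h ^ k * M k * (∫ x in U, (u x) ^ 2) ^ ((1 : ℝ) / 2) := by
  intro V U hV hU hVU hVc hUU
  have hVU' : V ⊆ U := subset_closure.trans hVU
  have hMw := hM.1
  have hMpos := hMw.1
  -- the space of solutions
  let T := {φ : (Fin n → ℝ) → ℝ // ContDiff ℝ (⊤ : ℕ∞) φ ∧ HasCompactSupport φ ∧ tsupport φ ⊆ U}
  have hT : ∀ φ : T, MemLp (transposeOp m a φ.1) 2 (volume.restrict U) := fun φ =>
    aux_transpose hΩ (fun α hα => (ha α hα).1) φ.1 φ.2.1 φ.2.2.1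
      (φ.2.2.2.trans (hUU.trans hU₀Ω)) _
  choose p hp using fun φ : T => aux_pair U _ (hT φ)
  let H : Submodule ℝ (Lp ℝ 2 (volume.restrict U)) := ⨅ φ : T, (p φ).ker
  have hHmem : ∀ f : Lp ℝ 2 (volume.restrict U), f ∈ H ↔ ∀ φ : T, p φ f = 0 := by
    intro f; simp [H]
  have hHclosed : IsClosed (H : Set (Lp ℝ 2 (volume.restrict U))) := by
    have : (H : Set (Lp ℝ 2 (volume.restrict U))) = ⋂ φ : T, {f | p φ f = 0} := by
      ext f; simp only [SetLike.mem_coe, hHmem, Set.mem_iInter, Set.mem_ofPred_eq]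
    rw [this]
    exact isClosed_iInter fun φ => isClosed_eq (p φ).continuous continuous_const
  have : CompleteSpace H := hHclosed.completeSpace_coe
  have hHweak : ∀ f : Lp ℝ 2 (volume.restrict U), f ∈ H → WeakKernel m a U f := by
    intro f hf φ h1 h2 h3
    have := (hHmem f).1 hf ⟨φ, h1, h2, h3⟩
    rwa [hp] at this
  -- the functionals
  let T' := {φ : (Fin n → ℝ) → ℝ // ContDiff ℝ (⊤ : ℕ∞) φ ∧ HasCompactSupport φ ∧ tsupport φ ⊆ V}
  let L : (Fin n → ℕ) → List (Fin n) :=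
    fun α => (List.finRange n).flatMap fun i => List.replicate (α i) i
  have hT' : ∀ i : (Fin n → ℕ) × T',
      MemLp ((L i.1).reverse.foldr pd i.2.1) 2 (volume.restrict U) := fun i =>
    (aux_pd_contDiff _ i.2.2.1).continuous.memLp_of_hasCompactSupport
      (IsCompact.of_isClosed_subset (s := tsupport i.2.1) i.2.2.2.1
        (isClosed_tsupport _) (aux_pd_tsupport _ _))
  choose q hq using fun i : (Fin n → ℕ) × T' => aux_pair U _ (hT' i)
  obtain ⟨N, C, hC, hNC⟩ := aux_baire (E := H) (fun i => (q i).comp H.subtypeL)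
    (fun N i => ((N : ℝ) + 1) * ((N : ℝ) + 1) ^ degree i.1 * M (degree i.1) * ∫ x, |i.2.1 x|) (by
      intro u
      obtain ⟨v, hv, huv, C', hC', h', hh', hb⟩ := hhypo V U hV hU hVU hVc hUU u.1
        (Lp.memLp u.1) (hHweak u.1 u.2)
      obtain ⟨N, hN⟩ := exists_nat_ge (max C' h')
      have hN1 : C' ≤ (N : ℝ) + 1 := by linarith [le_max_left C' h']
      have hN2 : h' ≤ (N : ℝ) + 1 := by linarith [le_max_right C' h']
      refine ⟨N, fun i => ?_⟩
      obtain ⟨α, ψ, hψ, hψc, hψs⟩ := i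
      have e : ((q ⟨α, ψ, hψ, hψc, hψs⟩).comp H.subtypeL) u
          = ∫ x in U, u.1 x * ((L α).reverse.foldr pd ψ) x := hq ⟨α, ψ, hψ, hψc, hψs⟩ u.1
      rw [e, aux_ibp_u hV hVU' hv huv (L α) ψ hψ hψc hψs]
      dsimp only
      set B : ℝ := ((N : ℝ) + 1) * ((N : ℝ) + 1) ^ degree α * M (degree α) with hB
      rw [← integral_const_mul, ← Real.norm_eq_abs]
      apply norm_integral_le_of_norm_le
      · exact ((hψ.continuous.abs.integrable_of_hasCompactSupport
          (hψc.comp_left (g := fun x : ℝ => |x|) abs_zero))).const_mul B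
      · refine Eventually.of_forall fun x => ?_
        rw [Real.norm_eq_abs, abs_mul]
        by_cases hx : x ∈ V
        · refine mul_le_mul_of_nonneg_right ((hb α x hx).trans ?_) (abs_nonneg _)
          have := (hMpos (degree α)).le
          rw [hB]
          gcongr
        · have : ψ x = 0 := image_eq_zero_of_notMem_tsupport fun h => hx (hψs h)
          simp [this])
  -- the constants
  have hvol : volume V < ⊤ := (measure_mono subset_closure).trans_lt hVc.measure_lt_top
  set W : ℝ := volume.real V with hW
  have hW0 : 0 ≤ W := measureReal_nonneg
  set A : ℝ := (N : ℝ) + 1 with hA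
  have hA1 : 1 ≤ A := by rw [hA]; linarith [(Nat.cast_nonneg N : (0 : ℝ) ≤ N)]
  refine ⟨C * A * Real.sqrt (W + 1), by positivity, A * 2 ^ n, by positivity, ?_⟩
  intro k u hu hwk v hv huv
  -- the element of H
  have hco := hu.coeFn_toLp
  have hmem : hu.toLp u ∈ H := by
    rw [hHmem]
    intro φ
    rw [hp, ← hwk φ.1 φ.2.1 φ.2.2.1 φ.2.2.2]
    apply integral_congr_ae
    filter_upwards [hco] with x hx
    rw [hx]
  have hnorm : ‖hu.toLp u‖ = (∫ x in U, (u x) ^ 2) ^ ((1 : ℝ) / 2) := by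
    rw [← Real.sqrt_eq_rpow, norm_eq_sqrt_real_inner, L2.inner_def]
    congr 1
    apply integral_congr_ae
    filter_upwards [hco] with x hx
    simp [hx, sq]
  rw [← hnorm]
  set R : ℝ := ‖hu.toLp u‖ with hR
  have hR0 : 0 ≤ R := norm_nonneg _
  have hpt : ∀ α, ∀ x ∈ V, |mderiv α v x| ≤ C * (A * A ^ degree α * M (degree α)) * R := by
    intro α
    apply aux_abs hV (aux_pd_contDiffOn hV (L α) hv)
    intro ψ hψ hψc hψs
    have h1 := hNC ⟨α, ψ, hψ, hψc, hψs⟩ ⟨hu.toLp u, hmem⟩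
    have e : ((q ⟨α, ψ, hψ, hψc, hψs⟩).comp H.subtypeL) ⟨hu.toLp u, hmem⟩
          = ∫ x in U, u x * ((L α).reverse.foldr pd ψ) x := by
      refine (hq ⟨α, ψ, hψ, hψc, hψs⟩ (hu.toLp u)).trans ?_
      apply integral_congr_ae
      filter_upwards [hco] with x hx
      rw [hx]
    rw [e, aux_ibp_u hV hVU' hv huv (L α) ψ hψ hψc hψs] at h1
    refine h1.trans_eq ?_
    change C * (A * A ^ degree α * M (degree α) * ∫ x, |ψ x|) * R = _
    ring
  have hMk := hMpos k
  set D : ℝ := C * (A * A ^ k * M k) * R with hD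
  have hD0 : 0 ≤ D := by positivity
  have hint : ∀ α ∈ midx n k, ∫ x in V, (mderiv α v x) ^ 2 ≤ D ^ 2 * W := by
    intro α hα
    have hdeg : degree α ≤ k := (Finset.mem_filter.1 hα).2
    refine (le_abs_self _).trans ?_
    rw [← Real.norm_eq_abs]
    apply norm_setIntegral_le_of_norm_le_const hvol
    intro x hx
    rw [Real.norm_eq_abs, abs_pow]
    apply pow_le_pow_left₀ (abs_nonneg _)
    refine (hpt α x hx).trans ?_
    have h1 : M (degree α) ≤ M k := aux_mono_s15 hMw hdeg
    have h2 : A ^ degree α ≤ A ^ k := pow_le_pow_right₀ hA1 hdeg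
    have := (hMpos (degree α)).le
    rw [hD]
    gcongr
  rw [← Real.sqrt_eq_rpow]
  apply Real.sqrt_le_iff.2
  refine ⟨by positivity, ?_⟩
  calc ∑ α ∈ midx n k, ∫ x in V, (mderiv α v x) ^ 2
      ≤ (midx n k).card • (D ^ 2 * W) := Finset.sum_le_card_nsmul _ _ _ hint
    _ = ((midx n k).card : ℝ) * (D ^ 2 * W) := by rw [nsmul_eq_mul]
    _ ≤ ((2 ^ n) ^ k * (2 ^ n) ^ k) * (D ^ 2 * (W + 1)) := by
        have c1 := aux_card n k
        have c2 : (1 : ℝ) ≤ (2 ^ n) ^ k := one_le_pow₀ (one_le_pow₀ (by norm_num))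
        have c3 : ((midx n k).card : ℝ) ≤ (2 ^ n) ^ k * (2 ^ n) ^ k := by nlinarith
        gcongr
        linarith
    _ = (C * A * Real.sqrt (W + 1) * (A * 2 ^ n) ^ k * M k * R) ^ 2 := by
        have hs : Real.sqrt (W + 1) ^ 2 = W + 1 := Real.sq_sqrt (by linarith)
        rw [hD, mul_pow A]
        have e : (C * A * Real.sqrt (W + 1) * (A ^ k * (2 ^ n) ^ k) * M k * R) ^ 2 =
          (C * A * (A ^ k * (2 ^ n) ^ k) * M k * R) ^ 2 * Real.sqrt (W + 1) ^ 2 := by ring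
        rw [e, hs]
        ring

end
end
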